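/- arXiv:1806.06264 — 5 statements merged into one kernel-verified Lean document; each statement's English description precedes it below -/
import Mathlib

section
/- Let p be a real number with 1 < p < 3/2, let ξ : [0,∞) → [0,∞) be nonincreasing, and let g : [0,∞) → [0,∞) be differentiable with g′(s) ≤ −ξ(s) g(s)^p for all s ≥ 0 and ∫_0^∞ g(s)^{1/2} ds < ∞. Let M > 0 and let h : [0,∞) × [0,∞) → [0,∞) be measurable with h(t,s) ≤ M for all t, s. Then there exists a constant k₀ > 0 such that for all t ≥ 0: ξ(t) ∫_0^t g(t−s) h(t,s) ds ≤ k₀ ( ∫_0^t (−g′(t−s)) h(t,s) ds )^{1/(2p−1)}. -/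
open MeasureTheory Set

/-- The Hölder inequality in interpolation form. -/
theorem holder_aux {α : Type*} [MeasurableSpace α] {μ : Measure α} {A B : α → ℝ} {a b : ℝ}
    (ha : 0 < a) (hb : 0 < b) (hab : a + b = 1)
    (hA : Integrable A μ) (hB : Integrable B μ) (hA0 : 0 ≤ᵐ[μ] A) (hB0 : 0 ≤ᵐ[μ] B) :
    ∫ x, A x ^ a * B x ^ b ∂μ ≤ (∫ x, A x ∂μ) ^ a * (∫ x, B x ∂μ) ^ b := by
  have key : ∀ (C : α → ℝ) (c : ℝ), 0 < c → Integrable C μ → 0 ≤ᵐ[μ] C →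
      MemLp (fun x => C x ^ c) (ENNReal.ofReal (1 / c)) μ ∧
      ∫ x, (C x ^ c) ^ (1 / c) ∂μ = ∫ x, C x ∂μ := by
    intro C c hc hC hC0
    have hE : (fun x => (C x ^ c) ^ (1 / c)) =ᵐ[μ] C := by
      filter_upwards [hC0] with x hx
      rw [← Real.rpow_mul hx, mul_one_div_cancel hc.ne', Real.rpow_one]
    refine ⟨?_, integral_congr_ae hE⟩
    have hpos : 0 < 1 / c := by positivity
    have hm : AEStronglyMeasurable (fun x => C x ^ c) μ :=
      (hC.aestronglyMeasurable.aemeasurable.pow_const c).aestronglyMeasurable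
    rw [← integrable_norm_rpow_iff hm (by simpa using hc) ENNReal.ofReal_ne_top,
      ENNReal.toReal_ofReal hpos.le]
    refine hC.congr ?_
    filter_upwards [hE, hC0] with x hx hx0
    rw [Real.norm_of_nonneg (Real.rpow_nonneg hx0 _), hx]
  have h1 := key A a ha hA hA0
  have h2 := key B b hb hB hB0
  have := integral_mul_le_Lp_mul_Lq_of_nonneg
    (Real.holderConjugate_one_div ha hb hab)
    (f := fun x => A x ^ a) (g := fun x => B x ^ b) (μ := μ)
    (by filter_upwards [hA0] with x hx using Real.rpow_nonneg hx _)
    (by filter_upwards [hB0] with x hx using Real.rpow_nonneg hx _) h1.1 h2.1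
  rw [h1.2, h2.2] at this
  simpa using this

/-- Abstract analytic content of Lemma 2.1 in the case `p > 1`. -/
theorem memory_integral_estimate_p_gt_one
    (p : ℝ) (hp₁ : 1 < p) (hp₂ : p < 3 / 2)
    (ξ g g' : ℝ → ℝ)
    (hξ_nonneg : ∀ s, 0 ≤ s → 0 ≤ ξ s)
    (hξ_mono : AntitoneOn ξ (Ici 0))
    (hg_nonneg : ∀ s, 0 ≤ s → 0 ≤ g s)
    (hg_deriv : ∀ s, 0 ≤ s → HasDerivAt g (g' s) s)
    (hg_decay : ∀ s, 0 ≤ s → g' s ≤ -ξ s * g s ^ p)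
    (hg_int : IntegrableOn (fun s => g s ^ ((1 : ℝ) / 2)) (Ici 0))
    (M : ℝ) (hM : 0 < M)
    (h : ℝ → ℝ → ℝ)
    (hh_meas : Measurable (Function.uncurry h))
    (hh_nonneg : ∀ t s, 0 ≤ h t s)
    (hh_bdd : ∀ t s, h t s ≤ M) :
    ∃ k₀ > 0, ∀ t, 0 ≤ t →
      ξ t * ∫ s in (0 : ℝ)..t, g (t - s) * h t s ≤
        k₀ * (∫ s in (0 : ℝ)..t, -g' (t - s) * h t s) ^ (1 / (2 * p - 1)) := by
  have hq : 0 < 2 * p - 1 := by linarith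
  obtain ⟨b, hb⟩ : ∃ b, b = 1 / (2 * p - 1) := ⟨_, rfl⟩
  obtain ⟨a, ha⟩ : ∃ a, a = (2 * p - 2) / (2 * p - 1) := ⟨_, rfl⟩
  have hb0 : 0 < b := by rw [hb]; positivity
  have ha0 : 0 < a := by rw [ha]; exact div_pos (by linarith) hq
  have hab : a + b = 1 := by rw [ha, hb]; field_simp; ring
  have hexp : 1 / 2 * a + p * b = 1 := by rw [ha, hb]; field_simp; ring
  rw [← hb]
  obtain ⟨G, hG⟩ : ∃ G, G = ∫ s in Ici (0 : ℝ), g s ^ ((1 : ℝ) / 2) := ⟨_, rfl⟩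
  have hG0 : 0 ≤ G := by
    rw [hG]
    exact setIntegral_nonneg measurableSet_Ici fun s hs => Real.rpow_nonneg (hg_nonneg s hs) _
  have hξ0 := hξ_nonneg 0 le_rfl
  refine ⟨(ξ 0 * (G * M)) ^ a + 1, by positivity, fun t ht => ?_⟩
  have hcont : ContinuousOn g (Icc 0 t) := fun s hs =>
    (hg_deriv s hs.1).continuousAt.continuousWithinAt
  have hcontp : ∀ r : ℝ, 0 ≤ r → IntegrableOn (fun s => g (t - s) ^ r) (Ioc 0 t) := by
    intro r hr
    have : ContinuousOn (fun s => g (t - s) ^ r) (Icc 0 t) := by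
      refine ContinuousOn.rpow_const ?_ (fun _ _ => Or.inr hr)
      refine hcont.comp (by fun_prop) ?_
      intro s hs
      exact ⟨by linarith [hs.2], by linarith [hs.1]⟩
    exact this.integrableOn_Icc.mono_set Ioc_subset_Icc_self
  have hg'neg : ∀ s, 0 ≤ s → 0 ≤ -g' s := by
    intro s hs
    have h1 := hg_decay s hs
    have h2 := mul_nonneg (hξ_nonneg s hs) (Real.rpow_nonneg (hg_nonneg s hs) p)
    linarith
  have hg'int : IntegrableOn (fun s => -g' (t - s)) (Ioc 0 t) := by
    have h1 : IntervalIntegrable (fun s => -g' s) volume 0 t := by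
      rw [intervalIntegrable_iff_integrableOn_Ioc_of_le ht]
      exact intervalIntegral.integrableOn_deriv_of_nonneg (g := fun s => - g s) hcont.neg
        (fun x hx => (hg_deriv x hx.1.le).neg) (fun x hx => hg'neg x hx.1.le)
    have h2 := (h1.comp_sub_left t).symm
    simp only [sub_self, sub_zero] at h2
    rwa [intervalIntegrable_iff_integrableOn_Ioc_of_le ht] at h2
  have hhm : Measurable (fun s => h t s) := hh_meas.comp (by fun_prop : Measurable (fun s : ℝ => (t, s)))
  have mulh : ∀ f : ℝ → ℝ, IntegrableOn f (Ioc 0 t) →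
      IntegrableOn (fun s => f s * h t s) (Ioc 0 t) := fun f hf =>
    Integrable.mul_bdd (c := M) hf hhm.aestronglyMeasurable
      (Filter.Eventually.of_forall fun s => by
        rw [Real.norm_of_nonneg (hh_nonneg t s)]; exact hh_bdd t s)
  have hts : ∀ s ∈ Ioc (0 : ℝ) t, 0 ≤ t - s := fun s hs => by linarith [hs.2]
  have hgts : ∀ s ∈ Ioc (0 : ℝ) t, 0 ≤ g (t - s) := fun s hs => hg_nonneg _ (hts s hs)
  have hAi := mulh _ (hcontp (1 / 2) (by norm_num))
  have hBi := mulh _ (hcontp p (by linarith))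
  have hDi := mulh _ hg'int
  have hA0 : ∀ s ∈ Ioc (0 : ℝ) t, 0 ≤ g (t - s) ^ ((1 : ℝ) / 2) * h t s := fun s hs =>
    mul_nonneg (Real.rpow_nonneg (hgts s hs) _) (hh_nonneg t s)
  have hB0 : ∀ s ∈ Ioc (0 : ℝ) t, 0 ≤ g (t - s) ^ p * h t s := fun s hs =>
    mul_nonneg (Real.rpow_nonneg (hgts s hs) _) (hh_nonneg t s)
  have hH := holder_aux ha0 hb0 hab hAi hBi
    ((ae_restrict_iff' measurableSet_Ioc).2 (Filter.Eventually.of_forall hA0))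
    ((ae_restrict_iff' measurableSet_Ioc).2 (Filter.Eventually.of_forall hB0))
  have hEq : ∫ s in Ioc 0 t, (g (t - s) ^ ((1 : ℝ) / 2) * h t s) ^ a * (g (t - s) ^ p * h t s) ^ b
      = ∫ s in Ioc 0 t, g (t - s) * h t s := by
    refine setIntegral_congr_fun measurableSet_Ioc fun s hs => ?_
    have h1 := hgts s hs
    have h2 := hh_nonneg t s
    have e1 : g (t - s) ^ ((1 : ℝ) / 2 * a) * g (t - s) ^ (p * b) = g (t - s) := by
      rw [← Real.rpow_add' h1 (by rw [hexp]; norm_num), hexp, Real.rpow_one]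
    have e2 : h t s ^ a * h t s ^ b = h t s := by
      rw [← Real.rpow_add' h2 (by rw [hab]; norm_num), hab, Real.rpow_one]
    change (g (t - s) ^ ((1 : ℝ) / 2) * h t s) ^ a * (g (t - s) ^ p * h t s) ^ b =
      g (t - s) * h t s
    rw [Real.mul_rpow (Real.rpow_nonneg h1 _) h2, Real.mul_rpow (Real.rpow_nonneg h1 _) h2,
      ← Real.rpow_mul h1, ← Real.rpow_mul h1]
    calc _ = (g (t - s) ^ ((1 : ℝ) / 2 * a) * g (t - s) ^ (p * b)) *
          (h t s ^ a * h t s ^ b) := by ring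
      _ = _ := by rw [e1, e2]
  rw [hEq] at hH
  rw [intervalIntegral.integral_of_le ht, intervalIntegral.integral_of_le ht]
  have hAle : ∫ s in Ioc 0 t, g (t - s) ^ ((1 : ℝ) / 2) * h t s ≤ G * M := by
    calc _ ≤ ∫ s in Ioc 0 t, g (t - s) ^ ((1 : ℝ) / 2) * M :=
          setIntegral_mono_on hAi ((hcontp (1 / 2) (by norm_num)).mul_const M) measurableSet_Ioc
            fun s hs => mul_le_mul_of_nonneg_left (hh_bdd t s) (Real.rpow_nonneg (hgts s hs) _)
      _ = (∫ s in Ioc 0 t, g s ^ ((1 : ℝ) / 2)) * M := by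
          rw [integral_mul_const, ← intervalIntegral.integral_of_le ht,
            ← intervalIntegral.integral_of_le ht,
            intervalIntegral.integral_comp_sub_left (fun s => g s ^ ((1 : ℝ) / 2)) t]
          simp
      _ ≤ G * M := by
          refine mul_le_mul_of_nonneg_right ?_ hM.le
          rw [hG]
          refine setIntegral_mono_set hg_int ?_ ?_
          · exact (ae_restrict_iff' measurableSet_Ici).2 (Filter.Eventually.of_forall
              fun s hs => Real.rpow_nonneg (hg_nonneg s hs) _)
          · exact HasSubset.Subset.eventuallyLE fun s hs => hs.1.le
  have hBle : ξ t * ∫ s in Ioc 0 t, g (t - s) ^ p * h t s ≤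
      ∫ s in Ioc 0 t, -g' (t - s) * h t s := by
    rw [← integral_const_mul]
    refine setIntegral_mono_on (hBi.const_mul _) hDi measurableSet_Ioc fun s hs => ?_
    have h1 := hg_decay _ (hts s hs)
    have h2 : ξ t ≤ ξ (t - s) := hξ_mono (hts s hs) ht (by linarith [hs.1])
    have h3 := mul_le_mul_of_nonneg_right h2 (Real.rpow_nonneg (hgts s hs) p)
    rw [← mul_assoc]
    exact mul_le_mul_of_nonneg_right (by linarith) (hh_nonneg t s)
  have hAn := setIntegral_nonneg (μ := volume) measurableSet_Ioc hA0
  have hBn := setIntegral_nonneg (μ := volume) measurableSet_Ioc hB0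
  have hξt := hξ_nonneg t ht
  have hξle : ξ t ≤ ξ 0 := hξ_mono self_mem_Ici ht ht
  generalize (∫ s in Ioc 0 t, g (t - s) ^ ((1 : ℝ) / 2) * h t s) = A at *
  generalize (∫ s in Ioc 0 t, g (t - s) ^ p * h t s) = B at *
  generalize (∫ s in Ioc 0 t, g (t - s) * h t s) = I at *
  generalize (∫ s in Ioc 0 t, -g' (t - s) * h t s) = D at *
  have hD : 0 ≤ D := le_trans (mul_nonneg hξt hBn) hBle
  have eξ : ξ t ^ a * ξ t ^ b = ξ t := by
    rw [← Real.rpow_add' hξt (by rw [hab]; norm_num), hab, Real.rpow_one]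
  calc ξ t * I ≤ ξ t * (A ^ a * B ^ b) := mul_le_mul_of_nonneg_left hH hξt
    _ = (ξ t ^ a * ξ t ^ b) * (A ^ a * B ^ b) := by rw [eξ]
    _ = (ξ t * A) ^ a * (ξ t * B) ^ b := by
        rw [Real.mul_rpow hξt hAn, Real.mul_rpow hξt hBn]; ring
    _ ≤ (ξ 0 * (G * M)) ^ a * D ^ b := by
        have := mul_nonneg hξt hAn
        have := mul_nonneg hξt hBn
        gcongr
    _ ≤ ((ξ 0 * (G * M)) ^ a + 1) * D ^ b := by
        have := Real.rpow_nonneg hD b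
        nlinarith
end

section
/- Let E : [0,∞) → ℝ be nonnegative, differentiable and nonincreasing, let ξ : [0,∞) → ℝ be nonnegative, differentiable and nonincreasing, and let λ, γ > 0 be such that ξ(t) E′(t) ≤ −λ ξ(t) E(t) − γ E′(t) for all t ≥ 0. Then there exist constants λ₀, λ₁ > 0 such that E(t) ≤ λ₀ exp( −λ₁ ∫_0^t ξ(s) ds ) for all t ≥ 0. -/
open MeasureTheory Set

/-- Analytic core of the case `p = 1` of Theorem 3.3 (decay estimate (3.9)). -/
theorem general_exponential_decay
    (E E' ξ ξ' : ℝ → ℝ) (lam γ : ℝ) (hlam : 0 < lam) (hγ : 0 < γ)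
    (hE_nonneg : ∀ t, 0 ≤ t → 0 ≤ E t)
    (hE_deriv : ∀ t, 0 ≤ t → HasDerivAt E (E' t) t)
    (hE_mono : AntitoneOn E (Ici 0))
    (hξ_nonneg : ∀ t, 0 ≤ t → 0 ≤ ξ t)
    (hξ_deriv : ∀ t, 0 ≤ t → HasDerivAt ξ (ξ' t) t)
    (hξ_mono : AntitoneOn ξ (Ici 0))
    (hineq : ∀ t, 0 ≤ t → ξ t * E' t ≤ -lam * ξ t * E t - γ * E' t) :
    ∃ lam₀ > 0, ∃ lam₁ > 0, ∀ t, 0 ≤ t →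
      E t ≤ lam₀ * Real.exp (-lam₁ * ∫ s in (0 : ℝ)..t, ξ s) := by
  have hξc : ContinuousOn ξ (Ici 0) := fun t ht =>
    (hξ_deriv t ht).continuousAt.continuousWithinAt
  have hint : ∀ t, 0 ≤ t → IntervalIntegrable ξ volume 0 t := by
    intro t ht
    apply ContinuousOn.intervalIntegrable
    rw [uIcc_of_le ht]
    exact hξc.mono Icc_subset_Ici_self
  have h0 : 0 < ξ 0 + γ := by linarith [hξ_nonneg 0 le_rfl]
  set c := lam / (ξ 0 + γ) with hc
  have hcpos : 0 < c := div_pos hlam h0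
  have hcm : c * (ξ 0 + γ) = lam := by rw [hc]; field_simp
  have hkey : ∀ t, 0 ≤ t → E' t + c * ξ t * E t ≤ 0 := by
    intro t ht
    have h1 := hineq t ht
    have h2 : 0 ≤ ξ t * E t := mul_nonneg (hξ_nonneg t ht) (hE_nonneg t ht)
    have h3 : 0 < ξ t + γ := by linarith [hξ_nonneg t ht]
    have h4 : ξ t ≤ ξ 0 := hξ_mono (mem_Ici.2 le_rfl) (mem_Ici.2 ht) ht
    have h5 : c * (ξ t + γ) ≤ lam := by
      rw [← hcm]; gcongr
    have h6 : c * (ξ t + γ) * (ξ t * E t) ≤ lam * (ξ t * E t) :=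
      mul_le_mul_of_nonneg_right h5 h2
    by_contra hcon
    have h7 := mul_pos h3 (not_le.1 hcon)
    nlinarith
  have hder : ∀ t, 0 < t → HasDerivAt (fun u => ∫ s in (0 : ℝ)..u, ξ s) (ξ t) t := by
    intro t ht
    refine intervalIntegral.integral_hasDerivAt_right (hint t ht.le) ?_
      (hξ_deriv t ht.le).continuousAt
    exact (hξc.mono Ioi_subset_Ici_self).stronglyMeasurableAtFilter isOpen_Ioi t ht
  have hFder : ∀ t, 0 < t → HasDerivAt (fun u => E u * Real.exp (c * ∫ s in (0 : ℝ)..u, ξ s))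
      (E' t * Real.exp (c * ∫ s in (0 : ℝ)..t, ξ s) +
        E t * (Real.exp (c * ∫ s in (0 : ℝ)..t, ξ s) * (c * ξ t))) t := by
    intro t ht
    exact (hE_deriv t ht.le).mul (((hder t ht).const_mul c).exp)
  have hbound : ∀ t, 0 ≤ t → E t * Real.exp (c * ∫ s in (0 : ℝ)..t, ξ s) ≤ E 0 := by
    intro t ht
    have hIc : ContinuousOn (fun u => ∫ s in (0 : ℝ)..u, ξ s) (Icc 0 t) := by
      have := intervalIntegral.continuousOn_primitive_interval' (hint t ht) left_mem_uIcc
      rwa [uIcc_of_le ht] at this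
    have hEc : ContinuousOn E (Icc 0 t) := fun u hu =>
      (hE_deriv u hu.1).continuousAt.continuousWithinAt
    have hanti : AntitoneOn (fun u => E u * Real.exp (c * ∫ s in (0 : ℝ)..u, ξ s)) (Icc 0 t) := by
      apply antitoneOn_of_deriv_nonpos (convex_Icc 0 t)
      · exact hEc.mul (Real.continuous_exp.comp_continuousOn (continuousOn_const.mul hIc))
      · intro u hu
        rw [interior_Icc] at hu
        exact (hFder u hu.1).differentiableAt.differentiableWithinAt
      · intro u hu
        rw [interior_Icc] at hu
        rw [(hFder u hu.1).deriv]
        have h := mul_nonpos_of_nonpos_of_nonneg (hkey u hu.1.le)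
          (Real.exp_pos (c * ∫ s in (0 : ℝ)..u, ξ s)).le
        linarith
    have := hanti (left_mem_Icc.2 ht) (right_mem_Icc.2 ht) ht
    simpa using this
  refine ⟨E 0 + 1, by linarith [hE_nonneg 0 le_rfl], c, hcpos, fun t ht => ?_⟩
  rw [neg_mul, Real.exp_neg, ← div_eq_mul_inv, le_div_iff₀ (Real.exp_pos _)]
  linarith [hbound t ht]
end

section
/- Let p be a real number with 1 < p < 3/2, let E : [0,∞) → ℝ be nonnegative, differentiable and nonincreasing, let ξ : [0,∞) → ℝ be positive, differentiable and nonincreasing, and let λ, K > 0 be such that ξ(t) E′(t) ≤ −λ ξ(t) E(t) + K (−E′(t))^{1/(2p−1)} for all t ≥ 0. Then there exists λ₀ > 0 such that E(t) ≤ λ₀ ( 1 + ∫_0^t ξ(s)^{2p−1} ds )^{−1/(2p−2)} for all t ≥ 0. -/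
open MeasureTheory Set

lemma decay_aux (q lam K M N e x D : ℝ) (hq : 1 < q) (hlam : 0 < lam) (hK : 0 < K)
    (he : 0 < e) (heM : e ≤ M) (hx : 0 < x) (hxN : x ≤ N) (hD : 0 ≤ D)
    (h : x * (-D) ≤ -lam * x * e + K * D ^ (1 / q)) :
    min (lam / 2 / (M ^ (q - 1) * N ^ q)) ((lam / (2 * K)) ^ q) * (x ^ q * e ^ q) ≤ D := by
  have hM : 0 < M := he.trans_le heM
  have hN : 0 < N := hx.trans_le hxN
  have hxe : 0 ≤ x ^ q * e ^ q := by positivity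
  rcases le_total (lam * e / 2) D with h1 | h1
  · refine (mul_le_mul_of_nonneg_right (min_le_left _ _) hxe).trans (le_trans ?_ h1)
    have h2 : e ^ q = e * e ^ (q - 1) := by
      rw [Real.rpow_sub_one he.ne']; field_simp
    have h3 : e ^ (q - 1) ≤ M ^ (q - 1) := Real.rpow_le_rpow he.le heM (by linarith)
    have h4 : x ^ q ≤ N ^ q := Real.rpow_le_rpow hx.le hxN (by linarith)
    have h5 : e ^ (q - 1) * x ^ q ≤ M ^ (q - 1) * N ^ q := by gcongr
    have hP : 0 < M ^ (q - 1) * N ^ q := by positivity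
    rw [h2, div_mul_eq_mul_div, div_le_iff₀ hP]
    have : 0 < lam * e / 2 := by positivity
    nlinarith [mul_le_mul_of_nonneg_left h5 this.le]
  · refine (mul_le_mul_of_nonneg_right (min_le_right _ _) hxe).trans ?_
    have h2 : lam / (2 * K) * (x * e) ≤ D ^ (1 / q) := by
      have h3 : lam * x * e / 2 ≤ K * D ^ (1 / q) := by
        nlinarith [mul_le_mul_of_nonneg_left h1 hx.le]
      rw [div_mul_eq_mul_div, div_le_iff₀ (by positivity)]
      nlinarith
    rw [← Real.mul_rpow hx.le he.le, ← Real.mul_rpow (by positivity) (by positivity)]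
    calc (lam / (2 * K) * (x * e)) ^ q ≤ (D ^ (1 / q)) ^ q :=
          Real.rpow_le_rpow (by positivity) h2 (by linarith)
      _ = D := by
          rw [← Real.rpow_mul hD, one_div_mul_cancel (by linarith), Real.rpow_one]

/-- Analytic core of the case `p > 1` of Theorem 3.3 (decay estimate (3.10)). -/
theorem general_polynomial_decay
    (p : ℝ) (hp₁ : 1 < p) (hp₂ : p < 3 / 2)
    (E E' ξ ξ' : ℝ → ℝ) (lam K : ℝ) (hlam : 0 < lam) (hK : 0 < K)
    (hE_nonneg : ∀ t, 0 ≤ t → 0 ≤ E t)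
    (hE_deriv : ∀ t, 0 ≤ t → HasDerivAt E (E' t) t)
    (hE_mono : AntitoneOn E (Ici 0))
    (hξ_pos : ∀ t, 0 ≤ t → 0 < ξ t)
    (hξ_deriv : ∀ t, 0 ≤ t → HasDerivAt ξ (ξ' t) t)
    (hξ_mono : AntitoneOn ξ (Ici 0))
    (hineq : ∀ t, 0 ≤ t →
      ξ t * E' t ≤ -lam * ξ t * E t + K * (-E' t) ^ (1 / (2 * p - 1))) :
    ∃ lam₀ > 0, ∀ t, 0 ≤ t →
      E t ≤ lam₀ * (1 + ∫ s in (0 : ℝ)..t, ξ s ^ (2 * p - 1))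
              ^ (-(1 / (2 * p - 2))) := by
  obtain ⟨q, hq⟩ : ∃ q, q = 2 * p - 1 := ⟨_, rfl⟩
  have hq1 : 1 < q := by linarith
  rw [show 2 * p - 2 = q - 1 by linarith]
  rw [← hq] at hineq ⊢
  have hr : 0 < q - 1 := by linarith
  have hE0 := hE_nonneg 0 le_rfl
  have hx0 := hξ_pos 0 le_rfl
  have hE'_nonpos : ∀ t, 0 ≤ t → E' t ≤ 0 := by
    intro t ht
    have h1 : derivWithin E (Ici 0) t ≤ 0 := hE_mono.derivWithin_nonpos
    rwa [(hE_deriv t ht).hasDerivWithinAt.derivWithin (uniqueDiffOn_Ici 0 t ht)] at h1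
  obtain ⟨M, hM⟩ : ∃ M, M = E 0 + 1 := ⟨_, rfl⟩
  have hMpos : 0 < M := by linarith
  obtain ⟨c, hc⟩ : ∃ c, c = min (lam / 2 / (M ^ (q - 1) * ξ 0 ^ q)) ((lam / (2 * K)) ^ q) :=
    ⟨_, rfl⟩
  have hcpos : 0 < c := by
    rw [hc]; exact lt_min (by positivity) (by positivity)
  obtain ⟨m, hm⟩ : ∃ m, m = min (M ^ (-(q - 1))) ((q - 1) * c) := ⟨_, rfl⟩
  have hmpos : 0 < m := by
    rw [hm]; exact lt_min (by positivity) (by positivity)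
  refine ⟨m ^ (-(1 / (q - 1))), by positivity, ?_⟩
  intro t ht
  have hI : 0 ≤ ∫ s in (0 : ℝ)..t, ξ s ^ q :=
    intervalIntegral.integral_nonneg ht fun s hs => (Real.rpow_pos_of_pos (hξ_pos s hs.1) q).le
  obtain ⟨I, hIdef⟩ : ∃ I, I = ∫ s in (0 : ℝ)..t, ξ s ^ q := ⟨_, rfl⟩
  rw [← hIdef] at hI ⊢
  rcases (hE_nonneg t ht).eq_or_lt with hz | hpos
  · rw [← hz]; positivity
  have hEpos : ∀ s ∈ Icc 0 t, 0 < E s := fun s hs =>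
    hpos.trans_le (hE_mono hs.1 ht hs.2)
  have hFd : ∀ s ∈ Icc 0 t, HasDerivAt (fun s => E s ^ (-(q - 1)))
      (E' s * (-(q - 1)) * E s ^ (-(q - 1) - 1)) s := fun s hs =>
    (hE_deriv s hs.1).rpow_const (Or.inl (hEpos s hs).ne')
  have hξc : ContinuousOn (fun s => (q - 1) * c * ξ s ^ q) (Icc 0 t) := by
    refine continuousOn_const.mul (ContinuousOn.rpow_const ?_ ?_)
    · exact fun s hs => (hξ_deriv s hs.1).continuousAt.continuousWithinAt
    · exact fun s hs => Or.inl (hξ_pos s hs.1).ne'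
  have key := intervalIntegral.integral_le_sub_of_hasDeriv_right_of_le ht
    (fun s hs => (hFd s hs).continuousAt.continuousWithinAt)
    (fun s hs => (hFd s (Ioo_subset_Icc_self hs)).hasDerivWithinAt)
    (hξc.integrableOn_Icc) (by
      intro s hs
      have hs' := Ioo_subset_Icc_self hs
      have he := hEpos s hs'
      have h1 := decay_aux q lam K M (ξ 0) (E s) (ξ s) (-E' s) hq1 hlam hK he
        (by linarith [hE_mono (mem_Ici.2 le_rfl) (mem_Ici.2 hs'.1) hs'.1]) (hξ_pos s hs'.1)
        (hξ_mono (mem_Ici.2 le_rfl) (mem_Ici.2 hs'.1) hs'.1)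
        (by linarith [hE'_nonpos s hs'.1])
        (by simpa using hineq s hs'.1)
      rw [← hc] at h1
      have h2 : E s ^ q * E s ^ (-(q - 1) - 1) = 1 := by
        rw [← Real.rpow_add he]; ring_nf; simp
      have h3 : 0 < E s ^ (-(q - 1) - 1) := by positivity
      calc (q - 1) * c * ξ s ^ q
          = (q - 1) * ((c * (ξ s ^ q * E s ^ q)) * E s ^ (-(q - 1) - 1)) := by
            linear_combination (-(q - 1) * c * ξ s ^ q) * h2
        _ ≤ (q - 1) * ((-E' s) * E s ^ (-(q - 1) - 1)) := by gcongr
        _ = _ := by ring)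
  rw [intervalIntegral.integral_const_mul, ← hIdef] at key
  have hF0 : M ^ (-(q - 1)) ≤ E 0 ^ (-(q - 1)) :=
    Real.rpow_le_rpow_of_nonpos (hEpos 0 ⟨le_rfl, ht⟩) (by linarith) (by linarith)
  have hm1 : m ≤ M ^ (-(q - 1)) := hm ▸ min_le_left _ _
  have hm2 : m ≤ (q - 1) * c := hm ▸ min_le_right _ _
  have hfin : m * (1 + I) ≤ E t ^ (-(q - 1)) := by
    nlinarith [mul_le_mul_of_nonneg_right hm2 hI]
  rw [← Real.mul_rpow hmpos.le (by linarith)]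
  have h1 : (E t ^ (-(q - 1))) ^ (-(1 / (q - 1))) = E t := by
    rw [← Real.rpow_mul hpos.le, neg_mul_neg, mul_one_div_cancel hr.ne', Real.rpow_one]
  rw [← h1]
  refine (Real.rpow_le_rpow_of_nonpos (by positivity) hfin ?_).trans_eq ?_
  · have : 0 < 1 / (q - 1) := by positivity
    linarith
  · rfl
end

section
/- Let α > 0, let E : [0,∞) → ℝ be nonnegative, differentiable and nonincreasing, let ξ : [0,∞) → ℝ be positive, differentiable and nonincreasing, and let λ, K > 0 be such that ξ(t) E′(t) ≤ −λ ξ(t) E(t) + K (−E′(t))^{1/(α+1)} for all t ≥ 0. Then there exist constants c₆ > 0 and C > 0 such that the function t ↦ ξ(t)^{α+1} E(t)^{α+1} + C E(t) is differentiable and its derivative satisfies (ξ^{α+1} E^{α+1} + C E)′(t) ≤ −c₆ ξ(t)^{α+1} E(t)^{α+1} for all t ≥ 0. -/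
open MeasureTheory Set

lemma aux_nonpos (f : ℝ → ℝ) (f' t : ℝ) (ht : 0 ≤ t) (hd : HasDerivAt f f' t)
    (hm : AntitoneOn f (Ici 0)) : f' ≤ 0 := by
  have h := hm.derivWithin_nonpos (x := t)
  rwa [hd.hasDerivWithinAt.derivWithin ((uniqueDiffOn_Ici (0:ℝ)) t ht)] at h

lemma aux_young (α lam K x m : ℝ) (hα : 0 < α) (hlam : 0 < lam) (hK : 0 < K)
    (hx : 0 ≤ x) (hm : 0 ≤ m) :
    K * m * x ^ α ≤ lam / 2 * x ^ (α + 1) + K * (2 * K / lam) ^ α * m ^ (α + 1) := by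
  rw [Real.rpow_add_one' hx (by linarith), Real.rpow_add_one' hm (by linarith)]
  have h1 : 0 ≤ x ^ α := Real.rpow_nonneg hx _
  have h2 : 0 ≤ m ^ α := Real.rpow_nonneg hm _
  have h3 : 0 ≤ (2 * K / lam) ^ α := by positivity
  rcases le_total (K * m) (lam / 2 * x) with h | h
  · have := mul_le_mul_of_nonneg_right h h1
    have : 0 ≤ K * (2 * K / lam) ^ α * (m ^ α * m) := by positivity
    linarith
  · have hxm : x ≤ 2 * K / lam * m := by
      rw [div_mul_eq_mul_div, le_div_iff₀ hlam]; linarith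
    have h4 := Real.rpow_le_rpow hx hxm hα.le
    rw [Real.mul_rpow (by positivity) hm] at h4
    have := mul_le_mul_of_nonneg_left h4 (mul_nonneg hK.le hm)
    have : 0 ≤ lam / 2 * (x ^ α * x) := by positivity
    linarith

/-- Intermediate differential inequality in the proof of Theorem 3.3 for `p > 1`. -/
theorem auxiliary_differential_inequality
    (α : ℝ) (hα : 0 < α)
    (E E' ξ ξ' : ℝ → ℝ) (lam K : ℝ) (hlam : 0 < lam) (hK : 0 < K)
    (hE_nonneg : ∀ t, 0 ≤ t → 0 ≤ E t)
    (hE_deriv : ∀ t, 0 ≤ t → HasDerivAt E (E' t) t)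
    (hE_mono : AntitoneOn E (Ici 0))
    (hξ_pos : ∀ t, 0 ≤ t → 0 < ξ t)
    (hξ_deriv : ∀ t, 0 ≤ t → HasDerivAt ξ (ξ' t) t)
    (hξ_mono : AntitoneOn ξ (Ici 0))
    (hineq : ∀ t, 0 ≤ t →
      ξ t * E' t ≤ -lam * ξ t * E t + K * (-E' t) ^ (1 / (α + 1))) :
    ∃ c₆ > 0, ∃ C > 0, ∀ t, 0 ≤ t → ∃ d : ℝ,
      HasDerivAt (fun τ => ξ τ ^ (α + 1) * E τ ^ (α + 1) + C * E τ) d t ∧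
        d ≤ -c₆ * ξ t ^ (α + 1) * E t ^ (α + 1) := by
  refine ⟨(α + 1) * (lam / 2), by positivity,
    (α + 1) * (K * (2 * K / lam) ^ α), by positivity, fun t ht => ?_⟩
  have hE := hE_nonneg t ht
  have hξ := hξ_pos t ht
  have hE' := aux_nonpos E _ t ht (hE_deriv t ht) hE_mono
  have hξ' := aux_nonpos ξ _ t ht (hξ_deriv t ht) hξ_mono
  refine ⟨_, (((hξ_deriv t ht).rpow_const (p := α + 1) (Or.inl hξ.ne')).mul
    ((hE_deriv t ht).rpow_const (p := α + 1) (Or.inr (by linarith)))).add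
    ((hE_deriv t ht).const_mul _), ?_⟩
  have hm : 0 ≤ (-E' t) ^ (1 / (α + 1)) := Real.rpow_nonneg (by linarith) _
  have hy := aux_young α lam K (ξ t * E t) _ hα hlam hK (by positivity) hm
  have hmm : ((-E' t) ^ (1 / (α + 1))) ^ (α + 1) = -E' t := by
    rw [← Real.rpow_mul (by linarith), one_div_mul_cancel (by linarith), Real.rpow_one]
  rw [hmm, Real.mul_rpow hξ.le hE, Real.mul_rpow hξ.le hE,
    Real.rpow_add_one' hξ.le (by linarith), Real.rpow_add_one' hE (by linarith)] at hy
  simp only [add_sub_cancel_right]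
  rw [Real.rpow_add_one' hξ.le (by linarith), Real.rpow_add_one' hE (by linarith)]
  have ha : 0 ≤ ξ t ^ α := Real.rpow_nonneg hξ.le _
  have hb : 0 ≤ E t ^ α := Real.rpow_nonneg hE _
  have h1 := mul_le_mul_of_nonneg_right (hineq t ht) (mul_nonneg ha hb)
  have h2 : 0 ≤ (-ξ' t) * ((α + 1) * ξ t ^ α * (E t ^ α * E t)) :=
    mul_nonneg (by linarith) (by positivity)
  have h3 := mul_le_mul_of_nonneg_left (add_le_add h1 hy) (by linarith : 0 ≤ α + 1)
  linarith
end

section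
/- Let p > 1, let E : [0,∞) → ℝ be nonnegative, differentiable and nonincreasing, let ξ : [0,∞) → ℝ be positive, differentiable and nonincreasing, and let λ, K > 0 be such that ξ(t) E′(t) ≤ −λ ξ(t) E(t) + K (−E′(t))^{1/p} for all t ≥ 0. Then there exists λ₀ > 0 such that E(t) ≤ λ₀ ( 1 + ∫_0^t ξ(s)^p ds )^{−1/(p−1)} for all t ≥ 0. -/
open MeasureTheory Set

/-- Analytic core of the improved (optimal) decay estimate (3.12) of Theorem 3.3. -/
theorem optimal_polynomial_decay
    (p : ℝ) (hp : 1 < p)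
    (E E' ξ ξ' : ℝ → ℝ) (lam K : ℝ) (hlam : 0 < lam) (hK : 0 < K)
    (hE_nonneg : ∀ t, 0 ≤ t → 0 ≤ E t)
    (hE_deriv : ∀ t, 0 ≤ t → HasDerivAt E (E' t) t)
    (hE_mono : AntitoneOn E (Ici 0))
    (hξ_pos : ∀ t, 0 ≤ t → 0 < ξ t)
    (hξ_deriv : ∀ t, 0 ≤ t → HasDerivAt ξ (ξ' t) t)
    (hξ_mono : AntitoneOn ξ (Ici 0))
    (hineq : ∀ t, 0 ≤ t →
      ξ t * E' t ≤ -lam * ξ t * E t + K * (-E' t) ^ (1 / p)) :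
    ∃ lam₀ > 0, ∀ t, 0 ≤ t →
      E t ≤ lam₀ * (1 + ∫ s in (0 : ℝ)..t, ξ s ^ p) ^ (-(1 / (p - 1))) := by
  have hp0 : 0 < p := by linarith
  have hq : 0 < p - 1 := by linarith
  have hnn : ∀ t, 0 ≤ t → 0 ≤ ∫ s in (0 : ℝ)..t, ξ s ^ p := fun t ht =>
    intervalIntegral.integral_nonneg ht fun s hs => Real.rpow_nonneg (hξ_pos s hs.1).le p
  rcases (hE_nonneg 0 le_rfl).eq_or_lt with hE0 | hE0
  · refine ⟨1, one_pos, fun t ht => ?_⟩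
    have h1 : E t ≤ E 0 := hE_mono (mem_Ici.2 le_rfl) (mem_Ici.2 ht) ht
    have h2 : 0 ≤ (1 + ∫ s in (0 : ℝ)..t, ξ s ^ p) ^ (-(1 / (p - 1))) :=
      Real.rpow_nonneg (by linarith [hnn t ht]) _
    linarith
  have hξ0 := hξ_pos 0 le_rfl
  -- the pointwise inequality
  obtain ⟨c, hc, hcE⟩ : ∃ c > 0, ∀ t, 0 ≤ t → c * (ξ t ^ p * E t ^ p) ≤ -E' t := by
    have hA : 0 < ξ 0 ^ p * E 0 ^ (p - 1) :=
      mul_pos (Real.rpow_pos_of_pos hξ0 _) (Real.rpow_pos_of_pos hE0 _)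
    have hB : 0 < (lam / (2 * K)) ^ p := Real.rpow_pos_of_pos (by positivity) _
    refine ⟨min (lam / 2 / (ξ 0 ^ p * E 0 ^ (p - 1))) ((lam / (2 * K)) ^ p),
      lt_min (by positivity) hB, fun t ht => ?_⟩
    have hD : E' t ≤ 0 := by
      have h := hE_mono.derivWithin_nonpos (x := t)
      rwa [(hE_deriv t ht).hasDerivWithinAt.derivWithin
        (uniqueDiffOn_Ici 0 t (mem_Ici.2 ht))] at h
    have hξt := hξ_pos t ht
    have hEt := hE_nonneg t ht
    have hle : E t ≤ E 0 := hE_mono (mem_Ici.2 le_rfl) (mem_Ici.2 ht) ht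
    have hξle : ξ t ≤ ξ 0 := hξ_mono (mem_Ici.2 le_rfl) (mem_Ici.2 ht) ht
    have hpos : 0 ≤ ξ t ^ p * E t ^ p := by positivity
    have hi := hineq t ht
    by_cases hcase : lam / 2 * E t ≤ -E' t
    · refine le_trans (mul_le_mul_of_nonneg_right (min_le_left _ _) hpos) ?_
      refine le_trans ?_ hcase
      have e1 : E t ^ p = E t ^ (p - 1) * E t := by
        have := Real.rpow_add_one' hEt (y := p - 1) (by linarith)
        rw [← this]; congr 1; ring
      have e2 : ξ t ^ p * E t ^ p ≤ (ξ 0 ^ p * E 0 ^ (p - 1)) * E t := by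
        rw [e1, ← mul_assoc]
        gcongr
      calc _ ≤ lam / 2 / (ξ 0 ^ p * E 0 ^ (p - 1)) * ((ξ 0 ^ p * E 0 ^ (p - 1)) * E t) := by
            gcongr
        _ = lam / 2 * E t := by field_simp
    · push Not at hcase
      refine le_trans (mul_le_mul_of_nonneg_right (min_le_right _ _) hpos) ?_
      have h3 : ξ t * (-E' t) ≤ ξ t * (lam / 2 * E t) := by gcongr
      have h4 : lam / 2 * (ξ t * E t) ≤ K * (-E' t) ^ (1 / p) := by nlinarith
      have h5 : lam / (2 * K) * (ξ t * E t) ≤ (-E' t) ^ (1 / p) := by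
        have : lam / (2 * K) * (ξ t * E t) = (lam / 2 * (ξ t * E t)) / K := by field_simp
        rw [this, div_le_iff₀ hK]; linarith
      have h6 := Real.rpow_le_rpow (by positivity) h5 hp0.le
      rw [← Real.rpow_mul (by linarith), one_div_mul_cancel hp0.ne', Real.rpow_one,
        Real.mul_rpow (by positivity) (by positivity),
        Real.mul_rpow hξt.le hEt] at h6
      exact h6
  -- constants
  set m := min (E 0 ^ (-(p - 1))) (c * (p - 1)) with hm
  have hmpos : 0 < m := lt_min (Real.rpow_pos_of_pos hE0 _) (by positivity)
  refine ⟨m ^ (-(1 / (p - 1))), Real.rpow_pos_of_pos hmpos _, fun t ht => ?_⟩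
  have hI := hnn t ht
  rcases (hE_nonneg t ht).eq_or_lt with hEt | hEt
  · rw [← hEt]
    exact mul_nonneg (Real.rpow_nonneg hmpos.le _) (Real.rpow_nonneg (by linarith) _)
  have hEpos : ∀ s ∈ Icc 0 t, 0 < E s := fun s hs =>
    hEt.trans_le (hE_mono (mem_Ici.2 hs.1) (mem_Ici.2 ht) hs.2)
  have hcont : ∀ s, 0 ≤ s → ContinuousAt (fun s => ξ s ^ p) s := fun s hs =>
    (hξ_deriv s hs).continuousAt.rpow_const (Or.inr hp0.le)
  have hint : ∀ s, 0 ≤ s → IntervalIntegrable (fun s => ξ s ^ p) volume 0 s := fun s hs => by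
    apply ContinuousOn.intervalIntegrable
    intro x hx
    rw [uIcc_of_le hs] at hx
    exact (hcont x hx.1).continuousWithinAt
  have hder : ∀ s ∈ Ioo 0 t, HasDerivAt
      (fun s => E s ^ (-(p - 1)) - c * (p - 1) * ∫ x in (0 : ℝ)..s, ξ x ^ p)
      (E' s * (-(p - 1)) * E s ^ (-(p - 1) - 1) - c * (p - 1) * ξ s ^ p) s := fun s hs => by
    refine ((hE_deriv s hs.1.le).rpow_const
      (Or.inl (hEpos s ⟨hs.1.le, hs.2.le⟩).ne')).sub (HasDerivAt.const_mul _ ?_)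
    refine intervalIntegral.integral_hasDerivAt_right (hint s hs.1.le) ?_ (hcont s hs.1.le)
    exact ContinuousOn.stronglyMeasurableAtFilter isOpen_Ioi
      (fun x (hx : 0 < x) => (hcont x hx.le).continuousWithinAt) s hs.1
  have hmono : MonotoneOn
      (fun s => E s ^ (-(p - 1)) - c * (p - 1) * ∫ x in (0 : ℝ)..s, ξ x ^ p) (Icc 0 t) := by
    apply monotoneOn_of_deriv_nonneg (convex_Icc 0 t)
    · refine ContinuousOn.sub (fun s hs => ?_) (continuousOn_const.mul ?_)
      · exact ((hE_deriv s hs.1).continuousAt.rpow_const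
          (Or.inl (hEpos s hs).ne')).continuousWithinAt
      · have := intervalIntegral.continuousOn_primitive_interval (μ := volume)
          (f := fun s => ξ s ^ p) (a := 0) (b := t)
          ((intervalIntegrable_iff' (by simp)).1 (hint t ht))
        rwa [uIcc_of_le ht] at this
    · rw [interior_Icc]
      exact fun s hs => (hder s hs).differentiableAt.differentiableWithinAt
    · rw [interior_Icc]
      intro s hs
      rw [(hder s hs).deriv]
      have hEs := hEpos s ⟨hs.1.le, hs.2.le⟩
      have h1 := hcE s hs.1.le
      have e : E s ^ (-(p - 1) - 1) = (E s ^ p)⁻¹ := by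
        rw [← Real.rpow_neg hEs.le]; congr 1; ring
      have hEp := Real.rpow_pos_of_pos hEs p
      have h2 : c * ξ s ^ p ≤ -E' s * (E s ^ p)⁻¹ := by
        rw [← div_eq_mul_inv, le_div_iff₀ hEp]; linarith
      rw [e]
      nlinarith
  have h0 := hmono (left_mem_Icc.2 ht) (right_mem_Icc.2 ht) ht
  simp only [intervalIntegral.integral_same, mul_zero, sub_zero] at h0
  have hkey : m * (1 + ∫ s in (0 : ℝ)..t, ξ s ^ p) ≤ E t ^ (-(p - 1)) := by
    have a1 : m ≤ E 0 ^ (-(p - 1)) := min_le_left _ _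
    have a2 : m * (∫ s in (0 : ℝ)..t, ξ s ^ p) ≤ c * (p - 1) * ∫ s in (0 : ℝ)..t, ξ s ^ p :=
      mul_le_mul_of_nonneg_right (min_le_right _ _) hI
    linarith
  rw [← Real.mul_rpow hmpos.le (by linarith)]
  have h7 := Real.rpow_le_rpow_of_nonpos (z := -(1 / (p - 1)))
    (mul_pos hmpos (by linarith)) hkey (by simp only [neg_nonpos]; positivity)
  rw [← Real.rpow_mul hEt.le] at h7
  have e8 : -(p - 1) * -(1 / (p - 1)) = 1 := by field_simp
  rwa [e8, Real.rpow_one] at h7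
end
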